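/- arXiv:1910.06533 — 2 statements merged into one kernel-verified Lean document; each statement's English description precedes it below -/
import Mathlib

section
/- (Corollary 1.3) Let C := c(I). Suppose C has no symmetries, i.e. the only isometry T of ℝ³ with T(C) = C is the identity map. Then, for ε > 0 sufficiently small and for any δ ∈ (0, ε], the image φ_f(Ω_δ) is not congruent to any subset of ψ_f(Ω_ε): there is no isometry T of ℝ³ with T(φ_f(Ω_δ)) ⊆ ψ_f(Ω_ε), where Ω_δ := I × (−δ, δ). -/
noncomputable section
open Real Set
open scoped ContDiff

local notation "⟪" x ", " y "⟫" => @inner ℝ _ _ x y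

/-- Euclidean 3-space. -/
abbrev E3 := EuclideanSpace ℝ (Fin 3)

/-- The vector (cross) product of `ℝ³`. -/
def cross3 (u v : E3) : E3 :=
  (WithLp.equiv 2 (Fin 3 → ℝ)).symm
    ![u 1 * v 2 - u 2 * v 1, u 2 * v 0 - u 0 * v 2, u 0 * v 1 - u 1 * v 0]

/-!
Along the crease two half-surfaces meet transversally, so the tangent cone of `φ_f(Ω_δ)` at a point
of `C` spans three dimensions. Off `C`, the set `ψ_f(Ω_ε)` is an embedded surface, whose tangent
cones span at most two. An isometry `T` taking the first set into the second therefore maps `C` into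
`C`; a compact set is never isometric to a proper subset of itself, so `T` preserves `C` and is the
identity. But in a thin tube around `C` the map `(t, x, y) ↦ c t + x • ξ t + y • ξ̌ t` is injective:
in these coordinates the two origami images lie over complementary halves of `{x = 0} ∪ {y = 0}`
and meet only along `C`.
-/

open Filter Asymptotics Module
open scoped Topology

section Metric

variable {X : Type*}

theorem isometry_iterate [PseudoEMetricSpace X] {T : X → X} (hT : Isometry T) :
    ∀ n : ℕ, Isometry T^[n]
  | 0 => isometry_id
  | n + 1 => (isometry_iterate hT n).comp hT

theorem image_eq_of_isometry_of_image_subset [MetricSpace X] {K : Set X} (hK : IsCompact K)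
    {T : X → X} (hT : Isometry T) (hTK : T '' K ⊆ K) : T '' K = K := by
  refine hTK.antisymm fun x hx => ?_
  have hmaps : MapsTo T K K := mapsTo_iff_image_subset.mpr hTK
  by_contra hxT
  obtain ⟨r, hr, hball⟩ :=
    Metric.isOpen_iff.mp (hK.image hT.continuous).isClosed.isOpen_compl x hxT
  obtain ⟨y, -, φ, hφ, hlim⟩ := hK.tendsto_subseq fun n => hmaps.iterate n hx
  obtain ⟨N, hN⟩ := Metric.cauchySeq_iff'.mp hlim.cauchySeq r hr
  have hlt : φ N < φ (N + 1) := hφ N.lt_succ_self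
  -- cancelling `φ N` iterates of `T`, the orbit of `x` comes back to within `r` of `x`
  have hdist : dist (T^[φ (N + 1) - φ N] x) x < r := by
    calc dist (T^[φ (N + 1) - φ N] x) x
      _ = dist (T^[φ N] (T^[φ (N + 1) - φ N] x)) (T^[φ N] x) :=
        ((isometry_iterate hT _).dist_eq _ _).symm
      _ = dist (T^[φ (N + 1)] x) (T^[φ N] x) := by
        rw [← Function.iterate_add_apply, Nat.add_sub_of_le hlt.le]
      _ < r := hN (N + 1) N.le_succ
  refine hball hdist ?_
  obtain ⟨m, hm⟩ := Nat.exists_eq_succ_of_ne_zero (Nat.sub_pos_of_lt hlt).ne'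
  rw [hm, Function.iterate_succ_apply']
  exact mem_image_of_mem T (hmaps.iterate m hx)

theorem isBigO_nhdsSetWithin_of_isCompact [TopologicalSpace X] {E F : Type*} [Norm E]
    [SeminormedAddCommGroup F] {f : X → E} {g : X → F} {K s : Set X} (hK : IsCompact K)
    (hfg : ∀ x ∈ K, f =O[𝓝[s] x] g) : f =O[𝓝ˢ[s] K] g := by
  refine hK.induction_on (p := fun A => f =O[𝓝ˢ[s] A] g) ?_
    (fun A B hAB hB => hB.mono (nhdsSetWithin_mono_left hAB)) (fun A B hA hB => ?_) fun x hx => ?_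
  · simp only [nhdsSetWithin_empty', isBigO_bot]
  · simpa only [nhdsSetWithin, nhdsSet_union, inf_sup_right] using! hA.sup hB
  · obtain ⟨C, hC⟩ := (hfg x hx).bound
    obtain ⟨U, hU, hxU, hUC⟩ := mem_nhdsWithin.mp hC
    refine ⟨U, mem_nhdsWithin_of_mem_nhds (hU.mem_nhds hxU), ?_⟩
    rw [nhdsSetWithin, hU.nhdsSet_eq, inf_principal, isBigO_principal]
    exact ⟨C, hUC⟩

end Metric

section LowerLipschitz

variable {E F : Type*} [NormedAddCommGroup E] [NormedAddCommGroup F] {f : E → F} {s : Set E}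
  {x : E}

theorem isBigO_sub_of_injOn_isCompact {K : Set E} (hK : IsCompact K) (hKs : K ⊆ s)
    (hf : ContinuousOn f s) (hinj : InjOn f K)
    (hloc : ∀ x ∈ K, (fun p : E × E => p.1 - p.2) =O[𝓝[s ×ˢ s] (x, x)] fun p => f p.1 - f p.2) :
    (fun p : E × E => p.1 - p.2) =O[𝓝ˢ[s] K ×ˢ 𝓝ˢ[s] K] fun p => f p.1 - f p.2 := by
  rw [← hK.nhdsSetWithin_prod_eq hK]
  refine isBigO_nhdsSetWithin_of_isCompact (hK.prod hK) fun ⟨x, y⟩ ⟨hx, hy⟩ => ?_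
  obtain rfl | hxy := eq_or_ne x y
  · exact hloc x hx
  · have hne : f x - f y ≠ 0 := sub_ne_zero.mpr (hinj.ne hx hy hxy)
    have hdom : Tendsto (fun p : E × E => p.1 - p.2) (𝓝[s ×ˢ s] (x, y)) (𝓝 (x - y)) :=
      ((continuous_fst.sub continuous_snd).tendsto (x, y)).mono_left nhdsWithin_le_nhds
    have him : Tendsto (fun p : E × E => f p.1 - f p.2) (𝓝[s ×ˢ s] (x, y)) (𝓝 (f x - f y)) := by
      rw [nhdsWithin_prod_eq]
      exact ((hf x (hKs hx)).tendsto.comp tendsto_fst).sub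
        ((hf y (hKs hy)).tendsto.comp tendsto_snd)
    exact (isBigO_const_of_tendsto hdom hne).trans
      ((isEquivalent_const_iff_tendsto hne).mpr him).isBigO_symm

variable [NormedSpace ℝ E] [NormedSpace ℝ F]

theorem hasFDerivAtFilter_nhdsWithin_prod_of_contDiffOn (hf : ContDiffOn ℝ 1 f s)
    (hs : Convex ℝ s) (hs' : UniqueDiffOn ℝ s) (hx : x ∈ s) :
    HasFDerivAtFilter f (fderivWithin ℝ f s x) (𝓝[s ×ˢ s] (x, x)) := by
  refine .of_isLittleO (isLittleO_iff.mpr fun ε hε => ?_)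
  have hclose : ∀ᶠ y in 𝓝[s] x, ‖fderivWithin ℝ f s y - fderivWithin ℝ f s x‖ < ε := by
    simpa only [dist_eq_norm] using
      (hf.continuousOn_fderivWithin hs' le_rfl x hx).eventually (Metric.ball_mem_nhds _ hε)
  obtain ⟨r, hr, hball⟩ := Metric.mem_nhdsWithin_iff.mp hclose
  rw [nhdsWithin_prod_eq]
  have hmem : Metric.ball x r ∩ s ∈ 𝓝[s] x :=
    inter_mem (mem_nhdsWithin_of_mem_nhds (Metric.ball_mem_nhds x hr)) self_mem_nhdsWithin
  filter_upwards [prod_mem_prod hmem hmem] with p hp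
  exact ((convex_ball x r).inter hs).norm_image_sub_le_of_norm_hasFDerivWithin_le'
    (fun y hy => ((hf.differentiableOn one_ne_zero) y hy.2).hasFDerivWithinAt.mono
      inter_subset_right) (fun y hy => (hball hy).le) hp.2 hp.1

variable [FiniteDimensional ℝ E]

theorem isBigO_sub_of_injective_fderivWithin (hf : ContDiffOn ℝ 1 f s) (hs : Convex ℝ s)
    (hs' : UniqueDiffOn ℝ s) (hx : x ∈ s)
    (hinj : Function.Injective (fderivWithin ℝ f s x)) :
    (fun p : E × E => p.1 - p.2) =O[𝓝[s ×ˢ s] (x, x)] fun p => f p.1 - f p.2 :=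
  (hasFDerivAtFilter_nhdsWithin_prod_of_contDiffOn hf hs hs' hx).isTheta_sub
    (LinearMap.isClosedEmbedding_of_injective (LinearMap.ker_eq_bot.mpr hinj)).isInducing
    |>.isBigO_symm

end LowerLipschitz

section TangentCone

variable {V W E : Type*} [NormedAddCommGroup V] [NormedSpace ℝ V] [NormedAddCommGroup W]
  [NormedSpace ℝ W] [NormedAddCommGroup E] [NormedSpace ℝ E]

theorem tangentConeAt_image_subset_range [FiniteDimensional ℝ W] {g : W → E} {g' : W →L[ℝ] E}
    {B : Set W} {y : W} (hg : HasFDerivWithinAt g g' B y)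
    (hO : (fun z => z - y) =O[𝓟 B] fun z => g z - g y) :
    tangentConeAt ℝ (g '' B) (g y) ⊆ g'.range := by
  intro v hv
  obtain ⟨ι, l, hl, r, d, hd, hdB, hrd⟩ := exists_fun_of_mem_tangentConeAt hv
  obtain ⟨z, hz⟩ : ∃ z : ι → W, ∀ᶠ i in l, z i ∈ B ∧ g (z i) = g y + d i :=
    ⟨fun i => Function.invFunOn g B (g y + d i),
      hdB.mono fun i hi => ⟨Function.invFunOn_mem hi, Function.invFunOn_eq hi⟩⟩
  have hgz : (fun i => g (z i) - g y) =ᶠ[l] d := hz.mono fun i hi => by simp [hi.2]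
  have hzd : (fun i => z i - y) =O[l] d :=
    (hO.comp_tendsto (tendsto_principal.mpr (hz.mono fun i hi => hi.1))).trans_eventuallyEq hgz
  have hzy : Tendsto z l (𝓝[B] y) :=
    tendsto_nhdsWithin_iff.mpr
      ⟨tendsto_sub_nhds_zero_iff.mp (hzd.trans_tendsto hd), hz.mono fun i hi => hi.1⟩
  have hlin : (fun i => d i - g' (z i - y)) =o[l] d :=
    ((hg.isLittleO.comp_tendsto hzy).trans_isBigO hzd).congr' (hgz.sub .rfl) .rfl
  have hzero : Tendsto (fun i => r i • d i - r i • g' (z i - y)) l (𝓝 0) := by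
    simpa only [smul_sub] using (isLittleO_one_iff ℝ).mp
      (((isBigO_refl r l).smul_isLittleO hlin).trans_isBigO (hrd.isBigO_one ℝ))
  have hlim : Tendsto (fun i => g' (r i • (z i - y))) l (𝓝 v) := by
    simpa only [sub_sub_cancel, sub_zero, ← map_smul] using hrd.sub hzero
  exact (Submodule.closed_of_finiteDimensional g'.range).mem_of_tendsto hlim
    (.of_forall fun i => ⟨_, rfl⟩)

theorem finrank_le_finrank_of_image_subset_image [FiniteDimensional ℝ W] {f : V → E}
    {f' : V →L[ℝ] E} {A : Set V} {x : V} {g : W → E} {g' : W →L[ℝ] E} {B : Set W} {y : W}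
    (hf : HasFDerivWithinAt f f' A x) (hf' : Function.Injective f')
    (hA : Submodule.span ℝ (tangentConeAt ℝ A x) = ⊤) (hg : HasFDerivWithinAt g g' B y)
    (hO : (fun z => z - y) =O[𝓟 B] fun z => g z - g y) (hAB : f '' A ⊆ g '' B)
    (hxy : f x = g y) : finrank ℝ V ≤ finrank ℝ W := by
  have hcone : MapsTo f' (tangentConeAt ℝ A x) g'.range := fun v hv =>
    tangentConeAt_image_subset_range hg hO
      (hxy ▸ tangentConeAt_mono hAB (hf.mapsTo_tangent_cone hv))
  have hrange : f'.range ≤ g'.range := by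
    rw [LinearMap.range_eq_map, ← hA, Submodule.map_span_le]
    exact hcone
  calc finrank ℝ V = finrank ℝ f'.range := (LinearMap.finrank_range_of_inj hf').symm
    _ ≤ finrank ℝ g'.range := Submodule.finrank_mono hrange
    _ ≤ finrank ℝ W := LinearMap.finrank_range_le _

theorem hasFDerivAt_isometryEquiv (T : V ≃ᵢ E) (x : V) :
    HasFDerivAt T (T.toRealAffineIsometryEquiv.linearIsometryEquiv : V →L[ℝ] E) x :=
  T.toRealAffineIsometryEquiv.toAffineIsometry.toContinuousAffineMap.hasFDerivAt

end TangentCone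

section Fold

variable {E : Type*} [NormedAddCommGroup E] [NormedSpace ℝ E] {a b : ℝ} {c ξ η : ℝ → E}

/-- The surface obtained by folding a ruled strip along the crease `c`: its rulings leave the crease
in the directions `ξ t` and `-η t`. The origami maps `φ_f` and `ψ_f` are `ruledFold c ξ ξ̌` and
`ruledFold c ξ̌ ξ`. -/
def ruledFold (c ξ η : ℝ → E) (p : ℝ × ℝ) : E :=
  if 0 ≤ p.2 then c p.1 + p.2 • ξ p.1 else c p.1 + p.2 • η p.1

/-- The coordinates around a crease `c` given by a transverse pair of ruling fields; it parametrizes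
an open piece of space, and both origami maps with rulings `ξ` and `η` factor through it. -/
def creaseChart (c ξ η : ℝ → E) (p : ℝ × ℝ × ℝ) : E :=
  c p.1 + p.2.1 • ξ p.1 + p.2.2 • η p.1

/-- The folded strip in the coordinates of `creaseChart`: two half-planes meeting at a right angle
along the crease. -/
def foldParam (p : ℝ × ℝ) : ℝ × ℝ × ℝ :=
  (p.1, max p.2 0, min p.2 0)

@[simp]
theorem creaseChart_foldParam (p : ℝ × ℝ) :
    creaseChart c ξ η (foldParam p) = ruledFold c ξ η p := by
  rcases le_or_gt 0 p.2 with h | h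
  · simp [creaseChart, foldParam, ruledFold, h]
  · simp [creaseChart, foldParam, ruledFold, h.le, h.not_ge]

theorem creaseChart_image_foldParam_image (A : Set (ℝ × ℝ)) :
    creaseChart c ξ η '' (foldParam '' A) = ruledFold c ξ η '' A := by
  simp only [image_image, creaseChart_foldParam]

theorem norm_sub_le_two_mul_norm_foldParam_sub (p q : ℝ × ℝ) :
    ‖p - q‖ ≤ 2 * ‖foldParam p - foldParam q‖ := by
  set P := foldParam p - foldParam q
  have hfst : ‖p.1 - q.1‖ ≤ ‖P‖ := norm_fst_le P
  have hmax : ‖max p.2 0 - max q.2 0‖ ≤ ‖P‖ := (norm_fst_le P.2).trans (norm_snd_le P)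
  have hmin : ‖min p.2 0 - min q.2 0‖ ≤ ‖P‖ := (norm_snd_le P.2).trans (norm_snd_le P)
  refine Prod.norm_def (p - q) ▸ max_le ?_ ?_
  · exact hfst.trans (le_mul_of_one_le_left (norm_nonneg P) one_le_two)
  · calc ‖p.2 - q.2‖ = ‖max p.2 0 - max q.2 0 + (min p.2 0 - min q.2 0)‖ := by
          congr 1
          linarith [max_add_min p.2 0, max_add_min q.2 0]
      _ ≤ 2 * ‖P‖ := by
          rw [two_mul]
          exact (norm_add_le _ _).trans (add_le_add hmax hmin)

theorem segment_subset_foldParam_image {A : Set (ℝ × ℝ)} (hA : Convex ℝ A) {t : ℝ}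
    (ht : (t, 0) ∈ A) {q : ℝ × ℝ} (hq : q ∈ A) :
    segment ℝ (t, 0, 0) (foldParam q) ⊆ foldParam '' A := by
  rintro _ ⟨r, s, hr, hs, hrs, rfl⟩
  refine ⟨r • (t, 0) + s • q, hA ht hq hr hs hrs, ?_⟩
  simp [foldParam, mul_max_of_nonneg, mul_min_of_nonneg, hs]

theorem span_tangentConeAt_foldParam_image {δ t : ℝ} (hab : a < b) (hδ : 0 < δ)
    (ht : t ∈ Icc a b) :
    Submodule.span ℝ
      (tangentConeAt ℝ (foldParam '' (Icc a b ×ˢ Ioo (-δ) δ)) (t, 0, 0)) = ⊤ := by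
  set M := Submodule.span ℝ
    (tangentConeAt ℝ (foldParam '' (Icc a b ×ˢ Ioo (-δ) δ)) (t, 0, 0))
  have hmem {q : ℝ × ℝ} (hq₁ : q.1 ∈ Icc a b) (hq₂ : q.2 ∈ Ioo (-δ) δ) :
      foldParam q - (t, 0, 0) ∈ M := by
    have hconv : Convex ℝ (Icc a b ×ˢ Ioo (-δ) δ) := (convex_Icc a b).prod (convex_Ioo _ _)
    exact Submodule.subset_span (mem_tangentConeAt_of_segment_subset
      (segment_subset_foldParam_image hconv ⟨ht, by simpa using hδ⟩ ⟨hq₁, hq₂⟩))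
  obtain ⟨u, hu, hut⟩ : ∃ u ∈ Icc a b, u ≠ t :=
    (Icc_infinite hab).nontrivial.exists_ne t
  have hneg : -(δ / 2) ≤ 0 := by linarith
  have he₁ : ((u - t, 0, 0) : ℝ × ℝ × ℝ) ∈ M := by
    simpa only [foldParam, max_self, min_self, Prod.mk_sub_mk, sub_self, Prod.mk_zero_zero] using!
      hmem (q := (u, 0)) hu ⟨neg_lt_zero.mpr hδ, hδ⟩
  have he₂ : ((0, δ / 2, 0) : ℝ × ℝ × ℝ) ∈ M := by
    simpa only [foldParam, max_eq_left (half_pos hδ).le, min_eq_right (half_pos hδ).le,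
      Prod.mk_sub_mk, sub_self, sub_zero] using
      hmem (q := (t, δ / 2)) ht ⟨by linarith, half_lt_self hδ⟩
  have he₃ : ((0, 0, -(δ / 2)) : ℝ × ℝ × ℝ) ∈ M := by
    simpa only [foldParam, max_eq_right hneg, min_eq_left hneg, Prod.mk_sub_mk, sub_self,
      sub_zero] using hmem (q := (t, -(δ / 2))) ht ⟨by linarith, by linarith⟩
  refine eq_top_iff.mpr fun ⟨r, x, y⟩ _ => ?_
  convert M.add_mem (M.add_mem (M.smul_mem (r / (u - t)) he₁) (M.smul_mem (x / (δ / 2)) he₂))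
    (M.smul_mem (y / -(δ / 2)) he₃)
  · simp [div_mul_cancel₀ r (sub_ne_zero.mpr hut)]
  · simp [hδ.ne']
  · simp [div_mul_cancel₀ y (neg_ne_zero.mpr (half_pos hδ).ne')]

theorem differentiableWithinAt_ruledFold {s : Set ℝ} (hc : DifferentiableOn ℝ c s)
    (hξ : DifferentiableOn ℝ ξ s) (hη : DifferentiableOn ℝ η s) {p : ℝ × ℝ} (hp : p.1 ∈ s)
    (hp0 : p.2 ≠ 0) (J : Set ℝ) : DifferentiableWithinAt ℝ (ruledFold c ξ η) (s ×ˢ J) p := by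
  have hruled {ζ : ℝ → E} (hζ : DifferentiableOn ℝ ζ s) :
      DifferentiableWithinAt ℝ (fun q : ℝ × ℝ => c q.1 + q.2 • ζ q.1) (s ×ˢ J) p := by
    have hfst : MapsTo Prod.fst (s ×ˢ J) s := fun q hq => hq.1
    have hc' := (hc _ hp).comp p differentiableWithinAt_fst hfst
    have hζ' := (hζ _ hp).comp p differentiableWithinAt_fst hfst
    exact hc'.add (differentiableWithinAt_snd.smul hζ')
  rcases hp0.lt_or_gt with hneg | hpos
  · have hev : ∀ᶠ q : ℝ × ℝ in 𝓝 p, q.2 < 0 := continuousAt_snd.eventually_lt_const hneg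
    refine (hruled hη).congr_of_eventuallyEq (.filter_mono ?_ nhdsWithin_le_nhds) ?_
    · exact hev.mono fun q hq => if_neg hq.not_ge
    · exact if_neg hneg.not_ge
  · have hev : ∀ᶠ q : ℝ × ℝ in 𝓝 p, 0 < q.2 := continuousAt_snd.eventually_const_lt hpos
    refine (hruled hξ).congr_of_eventuallyEq (.filter_mono ?_ nhdsWithin_le_nhds) ?_
    · exact hev.mono fun q hq => if_pos hq.le
    · exact if_pos hpos.le

theorem contDiffOn_creaseChart {s : Set ℝ} {n : WithTop ℕ∞} (hc : ContDiffOn ℝ n c s)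
    (hξ : ContDiffOn ℝ n ξ s) (hη : ContDiffOn ℝ n η s) :
    ContDiffOn ℝ n (creaseChart c ξ η) (s ×ˢ univ) := by
  have hfst : MapsTo Prod.fst (s ×ˢ (univ : Set (ℝ × ℝ))) s := fun q hq => hq.1
  have hcomp {ζ : ℝ → E} (hζ : ContDiffOn ℝ n ζ s) :
      ContDiffOn ℝ n (fun q : ℝ × ℝ × ℝ => ζ q.1) (s ×ˢ univ) := hζ.comp contDiffOn_fst hfst
  have hx : ContDiffOn ℝ n (fun q : ℝ × ℝ × ℝ => q.2.1) (s ×ˢ univ) := by fun_prop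
  have hy : ContDiffOn ℝ n (fun q : ℝ × ℝ × ℝ => q.2.2) (s ×ˢ univ) := by fun_prop
  exact ((hcomp hc).add (hx.smul (hcomp hξ))).add (hy.smul (hcomp hη))

/-- The derivative of `creaseChart` at a crease point with tangent `u` and rulings `v`, `w`. -/
def creaseDeriv (u v w : E) : ℝ × ℝ × ℝ →L[ℝ] E :=
  (ContinuousLinearMap.toSpanSingleton ℝ u).coprod
    ((ContinuousLinearMap.toSpanSingleton ℝ v).coprod (ContinuousLinearMap.toSpanSingleton ℝ w))

theorem creaseDeriv_injective {u v w : E} (h : LinearIndependent ℝ ![u, v, w]) :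
    Function.Injective (creaseDeriv u v w) := by
  refine (injective_iff_map_eq_zero _).mpr fun ⟨r, x, y⟩ h0 => ?_
  have hcoeff := Fintype.linearIndependent_iff.mp h ![r, x, y] (by
    simpa [Fin.sum_univ_three, creaseDeriv, add_assoc] using! h0)
  exact Prod.ext (hcoeff 0) (Prod.ext (hcoeff 1) (hcoeff 2))

theorem hasFDerivWithinAt_creaseChart {s : Set ℝ} (hc : DifferentiableOn ℝ c s)
    (hξ : DifferentiableOn ℝ ξ s) (hη : DifferentiableOn ℝ η s) {t : ℝ} (ht : t ∈ s) :
    HasFDerivWithinAt (creaseChart c ξ η) (creaseDeriv (derivWithin c s t) (ξ t) (η t))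
      (s ×ˢ univ) (t, 0, 0) := by
  have hfst : MapsTo Prod.fst (s ×ˢ (univ : Set (ℝ × ℝ))) s := fun q hq => hq.1
  have hcomp {ζ : ℝ → E} (hζ : DifferentiableOn ℝ ζ s) :=
    (hζ t ht).hasDerivWithinAt.hasFDerivWithinAt.comp (t, (0 : ℝ × ℝ)) hasFDerivWithinAt_fst hfst
  have hx := ((ContinuousLinearMap.fst ℝ ℝ ℝ).comp
    (ContinuousLinearMap.snd ℝ ℝ (ℝ × ℝ))).hasFDerivWithinAt (s := s ×ˢ univ) (x := (t, 0, 0))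
  have hy := ((ContinuousLinearMap.snd ℝ ℝ ℝ).comp
    (ContinuousLinearMap.snd ℝ ℝ (ℝ × ℝ))).hasFDerivWithinAt (s := s ×ˢ univ) (x := (t, 0, 0))
  refine (((hcomp hc).add (hx.smul (hcomp hξ))).add (hy.smul (hcomp hη))).congr_fderiv ?_
  ext <;> simp [creaseDeriv]

theorem isBigO_sub_creaseChart (hab : a < b) (hc : ContDiffOn ℝ 1 c (Icc a b))
    (hinj : InjOn c (Icc a b)) (hξ : ContDiffOn ℝ 1 ξ (Icc a b)) (hη : ContDiffOn ℝ 1 η (Icc a b))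
    (hli : ∀ t ∈ Icc a b, LinearIndependent ℝ ![derivWithin c (Icc a b) t, ξ t, η t]) :
    (fun p => p.1 - p.2)
      =O[𝓝ˢ[Icc a b ×ˢ univ] (Icc a b ×ˢ {0}) ×ˢ 𝓝ˢ[Icc a b ×ˢ univ] (Icc a b ×ˢ {0})]
        fun p => creaseChart c ξ η p.1 - creaseChart c ξ η p.2 := by
  have hconv : Convex ℝ (Icc a b ×ˢ (univ : Set (ℝ × ℝ))) := (convex_Icc a b).prod convex_univ
  have huniq : UniqueDiffOn ℝ (Icc a b ×ˢ (univ : Set (ℝ × ℝ))) :=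
    (uniqueDiffOn_Icc hab).prod uniqueDiffOn_univ
  have hchart := contDiffOn_creaseChart hc hξ hη
  refine isBigO_sub_of_injOn_isCompact (isCompact_Icc.prod isCompact_singleton)
    (prod_mono_right (subset_univ _)) hchart.continuousOn ?_ ?_
  · rintro ⟨t, _⟩ ⟨ht, rfl⟩ ⟨u, _⟩ ⟨hu, rfl⟩ h
    exact Prod.ext (hinj ht hu (by simpa [creaseChart] using h)) rfl
  · rintro ⟨t, _⟩ ⟨ht, rfl⟩
    have hmem : (t, (0 : ℝ × ℝ)) ∈ Icc a b ×ˢ univ := ⟨ht, mem_univ _⟩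
    have hderiv := hasFDerivWithinAt_creaseChart (hc.differentiableOn one_ne_zero)
      (hξ.differentiableOn one_ne_zero) (hη.differentiableOn one_ne_zero) ht
    exact isBigO_sub_of_injective_fderivWithin hchart hconv huniq hmem
      ((hderiv.fderivWithin (huniq _ hmem)).symm ▸ creaseDeriv_injective (hli t ht))

theorem exists_isBigO_sub_creaseChart_on_ball (hab : a < b) (hc : ContDiffOn ℝ 1 c (Icc a b))
    (hinj : InjOn c (Icc a b)) (hξ : ContDiffOn ℝ 1 ξ (Icc a b)) (hη : ContDiffOn ℝ 1 η (Icc a b))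
    (hli : ∀ t ∈ Icc a b, LinearIndependent ℝ ![derivWithin c (Icc a b) t, ξ t, η t]) :
    ∃ ε > 0, (fun p => p.1 - p.2)
      =O[𝓟 ((Icc a b ×ˢ Metric.ball 0 ε) ×ˢ (Icc a b ×ˢ Metric.ball 0 ε))]
        fun p => creaseChart c ξ η p.1 - creaseChart c ξ η p.2 := by
  have hbasis : (𝓝ˢ[Icc a b ×ˢ univ] (Icc a b ×ˢ {(0 : ℝ × ℝ)})).HasBasis (0 < ·)
      fun ε => Icc a b ×ˢ Metric.ball 0 ε := by
    rw [isCompact_Icc.nhdsSetWithin_prod_eq isCompact_singleton, nhdsSetWithin_self,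
      nhdsSetWithin_singleton, nhdsWithin_univ]
    exact Metric.nhds_basis_ball.principal_prod _
  obtain ⟨C, hC⟩ := (isBigO_sub_creaseChart hab hc hinj hξ hη hli).bound
  obtain ⟨ε, hε, hbound⟩ := (hbasis.prod_same_index_mono hbasis
    (fun _ _ _ _ h => prod_mono_right (Metric.ball_subset_ball h))
    fun _ _ _ _ h => prod_mono_right (Metric.ball_subset_ball h)).eventually_iff.mp hC
  exact ⟨ε, hε, isBigO_principal.mpr ⟨C, fun p hp => hbound hp⟩⟩

theorem mapsTo_foldParam (s : Set ℝ) (ε : ℝ) :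
    MapsTo foldParam (s ×ˢ Ioo (-ε) ε) (s ×ˢ Metric.ball 0 ε) := by
  rintro ⟨t, v⟩ ⟨ht, hv⟩
  refine ⟨ht, ?_⟩
  rcases le_total 0 v with h | h <;> simp [foldParam, h, abs_lt.mpr hv]

theorem isBigO_sub_ruledFold {B : Set (ℝ × ℝ × ℝ)} {A : Set (ℝ × ℝ)} (hAB : MapsTo foldParam A B)
    (hB : (fun p => p.1 - p.2)
      =O[𝓟 (B ×ˢ B)] fun p => creaseChart c ξ η p.1 - creaseChart c ξ η p.2)
    {q : ℝ × ℝ} (hq : q ∈ A) :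
    (fun z => z - q) =O[𝓟 A] fun z => ruledFold c ξ η z - ruledFold c ξ η q := by
  have hfold : (fun z => z - q) =O[𝓟 A] fun z => foldParam z - foldParam q :=
    .of_bound 2 (.of_forall fun z => norm_sub_le_two_mul_norm_foldParam_sub z q)
  have hmaps : Tendsto (fun z => (foldParam z, foldParam q)) (𝓟 A) (𝓟 (B ×ˢ B)) :=
    tendsto_principal_principal.mpr fun z hz => ⟨hAB hz, hAB hq⟩
  simpa only [Function.comp_def, creaseChart_foldParam] using hfold.trans (hB.comp_tendsto hmaps)

theorem image_crease_subset_of_image_ruledFold_subset {δ : ℝ} (hab : a < b) (hδ : 0 < δ)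
    (hc : DifferentiableOn ℝ c (Icc a b)) (hξ : DifferentiableOn ℝ ξ (Icc a b))
    (hη : DifferentiableOn ℝ η (Icc a b))
    (hli : ∀ t ∈ Icc a b, LinearIndependent ℝ ![derivWithin c (Icc a b) t, ξ t, η t])
    {J : Set ℝ} (hO : ∀ q ∈ Icc a b ×ˢ J,
      (fun z => z - q) =O[𝓟 (Icc a b ×ˢ J)] fun z => ruledFold c η ξ z - ruledFold c η ξ q)
    (T : E ≃ᵢ E)
    (hT : T '' (ruledFold c ξ η '' (Icc a b ×ˢ Ioo (-δ) δ)) ⊆ ruledFold c η ξ '' (Icc a b ×ˢ J)) :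
    T '' (c '' Icc a b) ⊆ c '' Icc a b := by
  rintro _ ⟨_, ⟨t, ht, rfl⟩, rfl⟩
  obtain ⟨q, hq, hqt⟩ : T (c t) ∈ ruledFold c η ξ '' (Icc a b ×ˢ J) :=
    hT (mem_image_of_mem T ⟨(t, 0), ⟨ht, neg_lt_zero.mpr hδ, hδ⟩, by simp [ruledFold]⟩)
  obtain hq0 | hq0 := eq_or_ne q.2 0
  · exact ⟨q.1, hq.1, by simpa [ruledFold, hq0] using hqt⟩
  set A : Set (ℝ × ℝ) := Icc a b ×ˢ Ioo (-δ) δ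
  have hchart : HasFDerivWithinAt (creaseChart c ξ η)
      (creaseDeriv (derivWithin c (Icc a b) t) (ξ t) (η t)) (foldParam '' A) (t, 0, 0) :=
    (hasFDerivWithinAt_creaseChart hc hξ hη ht).mono
      (image_subset_iff.mpr fun p hp => ⟨hp.1, mem_univ _⟩)
  have hcrease : creaseChart c ξ η (t, 0, 0) = c t := by simp [creaseChart]
  have himage : (T ∘ creaseChart c ξ η) '' (foldParam '' A) ⊆
      ruledFold c η ξ '' (Icc a b ×ˢ J) := by
    rwa [image_comp, creaseChart_image_foldParam_image]
  have hderiv := (hasFDerivAt_isometryEquiv T _).comp_hasFDerivWithinAt _ hchart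
  have hinj := T.toRealAffineIsometryEquiv.linearIsometryEquiv.injective.comp
    (creaseDeriv_injective (hli t ht))
  have hdim : finrank ℝ (ℝ × ℝ × ℝ) ≤ finrank ℝ (ℝ × ℝ) :=
    finrank_le_finrank_of_image_subset_image hderiv hinj
      (span_tangentConeAt_foldParam_image hab hδ ht)
      (differentiableWithinAt_ruledFold hc hη hξ hq.1 hq0 J).hasFDerivWithinAt (hO q hq) himage
      ((congrArg T hcrease).trans hqt.symm)
  exact absurd hdim (by simp)

theorem ruledFold_image_not_subset_swap {A B : Set (ℝ × ℝ)} {S : Set (ℝ × ℝ × ℝ)}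
    (hinj : InjOn (creaseChart c η ξ) S) (hB : MapsTo foldParam B S) {t s : ℝ} (hs : 0 < s)
    (hA : (t, s) ∈ A) (hS : (t, 0, s) ∈ S) :
    ¬ ruledFold c ξ η '' A ⊆ ruledFold c η ξ '' B := by
  intro hsub
  obtain ⟨q, hq, hqp⟩ := hsub (mem_image_of_mem _ hA)
  have hchart : creaseChart c η ξ (foldParam q) = creaseChart c η ξ (t, 0, s) := by
    rw [creaseChart_foldParam, hqp]
    simp [creaseChart, ruledFold, hs.le]
  have hmin : min q.2 0 = s := congrArg (·.2.2) (hinj (hB hq) hS hchart)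
  exact hs.not_ge (hmin ▸ min_le_right q.2 0)

theorem stmt8_general (hab : a < b) (hc : ContDiffOn ℝ 1 c (Icc a b)) (hinj : InjOn c (Icc a b))
    (hξ : ContDiffOn ℝ 1 ξ (Icc a b)) (hη : ContDiffOn ℝ 1 η (Icc a b))
    (hli : ∀ t ∈ Icc a b, LinearIndependent ℝ ![derivWithin c (Icc a b) t, ξ t, η t])
    (hsym : ∀ T : E ≃ᵢ E, T '' (c '' Icc a b) = c '' Icc a b → ∀ x, T x = x) :
    ∃ ε₀ > 0, ∀ δ > 0, ∀ T : E ≃ᵢ E,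
      ¬ T '' (ruledFold c ξ η '' (Icc a b ×ˢ Ioo (-δ) δ)) ⊆
        ruledFold c η ξ '' (Icc a b ×ˢ Ioo (-ε₀) ε₀) := by
  have hli' : ∀ t ∈ Icc a b, LinearIndependent ℝ ![derivWithin c (Icc a b) t, η t, ξ t] := by
    intro t ht
    have hswap : ![derivWithin c (Icc a b) t, ξ t, η t] ∘ Equiv.swap 1 2 =
        ![derivWithin c (Icc a b) t, η t, ξ t] := by
      ext i
      fin_cases i <;> rfl
    exact hswap ▸ (hli t ht).comp _ (Equiv.injective _)
  obtain ⟨ε₀, hε₀, hO⟩ := exists_isBigO_sub_creaseChart_on_ball hab hc hinj hη hξ hli'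
  refine ⟨ε₀, hε₀, fun δ hδ T hT => ?_⟩
  have hfold := mapsTo_foldParam (Icc a b) ε₀
  have hcrease : T '' (c '' Icc a b) ⊆ c '' Icc a b :=
    image_crease_subset_of_image_ruledFold_subset hab hδ (hc.differentiableOn one_ne_zero)
      (hξ.differentiableOn one_ne_zero) (hη.differentiableOn one_ne_zero) hli
      (fun q hq => isBigO_sub_ruledFold hfold hO hq) T hT
  have hid : ⇑T = id := funext (hsym T (image_eq_of_isometry_of_image_subset
    (isCompact_Icc.image_of_continuousOn hc.continuousOn) T.isometry hcrease))
  obtain ⟨s, hs, hsmin⟩ := exists_between (lt_min hδ hε₀)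
  obtain ⟨hsδ, hsε₀⟩ := lt_min_iff.mp hsmin
  have ha : a ∈ Icc a b := left_mem_Icc.mpr hab.le
  have hchart : InjOn (creaseChart c η ξ) (Icc a b ×ˢ Metric.ball 0 ε₀) := fun p hp q hq hpq =>
    sub_eq_zero.mp (eventually_principal.mp hO.eq_zero_imp (p, q) ⟨hp, hq⟩ (sub_eq_zero.mpr hpq))
  rw [hid, image_id] at hT
  have hmem : (a, s) ∈ Icc a b ×ˢ Ioo (-δ) δ := ⟨ha, by linarith, hsδ⟩
  have hmem' : (a, (0, s)) ∈ Icc a b ×ˢ Metric.ball (0 : ℝ × ℝ) ε₀ :=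
    ⟨ha, by simpa [abs_of_pos hs, hε₀] using hsε₀⟩
  exact ruledFold_image_not_subset_swap hchart hfold hs hmem hmem' hT

end Fold

section Frame

theorem inner_eq_zero_of_hasDerivWithinAt_of_norm_eq {V : Type*} [NormedAddCommGroup V]
    [InnerProductSpace ℝ V] {u : ℝ → V} {u' : V} {s : Set ℝ} {t r : ℝ}
    (hs : UniqueDiffWithinAt ℝ s t) (ht : t ∈ s) (hu : HasDerivWithinAt u u' s t)
    (hr : ∀ x ∈ s, ‖u x‖ = r) : ⟪u t, u'⟫ = 0 := by
  have hconst : HasDerivWithinAt (‖u ·‖ ^ 2) 0 s t :=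
    (hasDerivWithinAt_const t s (r ^ 2)).congr_of_mem (fun x hx => by simp [hr x hx]) ht
  simpa using hs.eq_deriv s hu.norm_sq hconst

theorem cross3_eq_toLp_crossProduct (u v : E3) :
    cross3 u v = WithLp.toLp 2 (crossProduct u.ofLp v.ofLp) := by
  rw [cross_apply]
  rfl

theorem inner_self_cross3 (u v : E3) : ⟪u, cross3 u v⟫ = 0 := by
  rw [cross3_eq_toLp_crossProduct, real_inner_comm, EuclideanSpace.inner_eq_star_dotProduct]
  exact dot_self_cross u.ofLp v.ofLp

theorem inner_cross3_self (u v : E3) : ⟪v, cross3 u v⟫ = 0 := by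
  rw [cross3_eq_toLp_crossProduct, real_inner_comm, EuclideanSpace.inner_eq_star_dotProduct]
  exact dot_cross_self u.ofLp v.ofLp

theorem norm_cross3_sq (u v : E3) : ‖cross3 u v‖ ^ 2 = ‖u‖ ^ 2 * ‖v‖ ^ 2 - ⟪u, v⟫ ^ 2 := by
  have h := cross_dot_cross u.ofLp v.ofLp u.ofLp v.ofLp
  simp only [← real_inner_self_eq_norm_sq, cross3_eq_toLp_crossProduct,
    EuclideanSpace.inner_eq_star_dotProduct, star_trivial, h, dotProduct_comm v.ofLp u.ofLp]
  ring

theorem orthonormal_cross3 {u v : E3} (h : Orthonormal ℝ ![u, v]) :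
    Orthonormal ℝ ![u, v, cross3 u v] := by
  obtain ⟨hu, huv, hv, -⟩ : ‖u‖ = 1 ∧ ⟪u, v⟫ = 0 ∧ ‖v‖ = 1 ∧ True := by
    simpa [orthonormal_vecCons_iff] using h
  have hnorm : ‖cross3 u v‖ = 1 := by
    rw [← pow_eq_one_iff_of_nonneg (norm_nonneg _) two_ne_zero, norm_cross3_sq, hu, hv, huv]
    norm_num
  simp [orthonormal_vecCons_iff, Fin.forall_fin_two, hu, hv, huv, hnorm, inner_self_cross3,
    inner_cross3_self]

theorem contDiffAt_cross3 {m : WithTop ℕ∞} {u v : ℝ → E3} {t : ℝ} (hu : ContDiffAt ℝ m u t)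
    (hv : ContDiffAt ℝ m v t) : ContDiffAt ℝ m (fun x => cross3 (u x) (v x)) t := by
  rw [contDiffAt_euclidean] at hu hv ⊢
  intro i
  fin_cases i
  · exact ((hu 1).mul (hv 2)).sub ((hu 2).mul (hv 1))
  · exact ((hu 2).mul (hv 0)).sub ((hu 0).mul (hv 2))
  · exact ((hu 0).mul (hv 1)).sub ((hu 1).mul (hv 0))

/-- The curvature `κ` of an arc-length parametrized curve. -/
def curvature (c : ℝ → E3) (t : ℝ) : ℝ :=
  ‖deriv (deriv c) t‖

/-- The unit principal normal `n` of an arc-length parametrized curve; it is `0` where the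
curvature vanishes. -/
def unitNormal (c : ℝ → E3) (t : ℝ) : E3 :=
  (curvature c t)⁻¹ • deriv (deriv c) t

/-- The unit binormal `b = e × n` of an arc-length parametrized curve. -/
def binormal (c : ℝ → E3) (t : ℝ) : E3 :=
  cross3 (deriv c t) (unitNormal c t)

/-- The torsion `τ = n' · b` of an arc-length parametrized curve. -/
def torsion (c : ℝ → E3) (t : ℝ) : ℝ :=
  ⟪deriv (unitNormal c) t, binormal c t⟫

/-- The ruling direction `ξ` of the developable strip through `c` with first angular function `α`
and second angular function `β`. The dual strip has ruling `stripRuling c (-α) β̌`. -/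
def stripRuling (c : ℝ → E3) (α β : ℝ → ℝ) (t : ℝ) : E3 :=
  cos (β t) • deriv c t + sin (β t) • (cos (α t) • unitNormal c t + sin (α t) • binormal c t)

/-- `β` is the second angular function on `s` of the developable strip through `c` with first
angular function `α`. The equation is `cot β = (α' + τ) / (κ sin α)` cleared of denominators. -/
def IsRulingAngle (c : ℝ → E3) (α β : ℝ → ℝ) (s : Set ℝ) : Prop :=
  ∀ t ∈ s, 0 < β t ∧ β t < π ∧
    cos (β t) * (curvature c t * sin (α t)) = (deriv α t + torsion c t) * sin (β t)

variable {c : ℝ → E3} {α β : ℝ → ℝ} {s : Set ℝ} {t : ℝ}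

theorem isRulingAngle_neg_iff : IsRulingAngle c (-α) β s ↔ ∀ t ∈ s, 0 < β t ∧ β t < π ∧
    cos (β t) * (curvature c t * sin (α t)) = (deriv α t - torsion c t) * sin (β t) := by
  refine forall₂_congr fun t _ => and_congr_right' (and_congr_right' ?_)
  simp only [Pi.neg_apply, sin_neg, deriv.neg]
  constructor <;> intro h <;> linear_combination -h

theorem IsRulingAngle.sin_ne_zero (hβ : IsRulingAngle c α β s) (ht : t ∈ s) : sin (β t) ≠ 0 :=
  (sin_pos_of_mem_Ioo ⟨(hβ t ht).1, (hβ t ht).2.1⟩).ne'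

theorem orthonormal_deriv_unitNormal_binormal (hs : UniqueDiffWithinAt ℝ s t) (ht : t ∈ s)
    (hc : ContDiffAt ℝ 2 c t) (hunit : ∀ x ∈ s, ‖deriv c x‖ = 1)
    (hκ : curvature c t ≠ 0) : Orthonormal ℝ ![deriv c t, unitNormal c t, binormal c t] := by
  have hderiv : HasDerivAt (deriv c) (deriv (deriv c) t) t :=
    ((hc.derivWithin (m := 1) one_add_one_eq_two.le).differentiableAt one_ne_zero).hasDerivAt
  have hperp : ⟪deriv c t, deriv (deriv c) t⟫ = 0 :=
    inner_eq_zero_of_hasDerivWithinAt_of_norm_eq hs ht hderiv.hasDerivWithinAt hunit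
  have hnormal : ‖unitNormal c t‖ = 1 := norm_smul_inv_norm (norm_ne_zero_iff.mp hκ)
  refine orthonormal_cross3 (orthonormal_vecCons_iff.mpr ⟨hunit t ht, ?_, ?_⟩)
  · simp [unitNormal, inner_smul_right, hperp]
  · simpa [orthonormal_vecCons_iff]

theorem sin_ne_zero_of_abs_mem_Ioo {θ : ℝ} (hθ : |θ| ∈ Ioo 0 (π / 2)) : sin θ ≠ 0 := by
  have hbounds := abs_lt.mp hθ.2
  exact (sin_eq_zero_iff_of_lt_of_lt (by linarith [pi_pos]) (by linarith [pi_pos])).not.mpr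
    (abs_pos.mp hθ.1)

theorem eq_pi_div_two_sub_arctan_of_cos_mul_eq {θ K A : ℝ} (hθ : θ ∈ Ioo 0 π) (hK : K ≠ 0)
    (h : cos θ * K = A * sin θ) : θ = π / 2 - arctan (A / K) := by
  have htan : tan (π / 2 - θ) = A / K := by
    rw [tan_eq_sin_div_cos, sin_pi_div_two_sub, cos_pi_div_two_sub,
      div_eq_div_iff (sin_pos_of_mem_Ioo hθ).ne' hK, h]
  rw [← htan, arctan_tan (by linarith [hθ.2]) (by linarith [hθ.1]), sub_sub_cancel]

section Smoothness

variable {m : WithTop ℕ∞}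

theorem contDiffAt_deriv_deriv (hc : ContDiffAt ℝ (m + 2) c t) :
    ContDiffAt ℝ m (deriv (deriv c)) t :=
  (hc.derivWithin (m := m + 1) (by rw [add_assoc, one_add_one_eq_two])).derivWithin le_rfl

theorem contDiffAt_curvature (hc : ContDiffAt ℝ (m + 2) c t) (hκ : curvature c t ≠ 0) :
    ContDiffAt ℝ m (curvature c) t :=
  (contDiffAt_deriv_deriv hc).norm ℝ (norm_ne_zero_iff.mp hκ)

theorem contDiffAt_unitNormal (hc : ContDiffAt ℝ (m + 2) c t) (hκ : curvature c t ≠ 0) :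
    ContDiffAt ℝ m (unitNormal c) t :=
  ((contDiffAt_curvature hc hκ).inv hκ).smul (contDiffAt_deriv_deriv hc)

theorem contDiffAt_binormal (hc : ContDiffAt ℝ (m + 2) c t) (hκ : curvature c t ≠ 0) :
    ContDiffAt ℝ m (binormal c) t :=
  contDiffAt_cross3 (hc.derivWithin (add_le_add_right one_le_two m))
    (contDiffAt_unitNormal hc hκ)

theorem contDiffAt_torsion (hc : ContDiffAt ℝ (m + 3) c t) (hκ : curvature c t ≠ 0) :
    ContDiffAt ℝ m (torsion c) t := by
  have hn : ContDiffAt ℝ (m + 1) (unitNormal c) t :=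
    contDiffAt_unitNormal (by rwa [add_assoc, (by norm_num : (1 + 2 : WithTop ℕ∞) = 3)]) hκ
  have hb : ContDiffAt ℝ m (binormal c) t :=
    contDiffAt_binormal (hc.of_le (add_le_add_right (by norm_num) m)) hκ
  exact (hn.derivWithin le_rfl).inner ℝ hb

theorem contDiffOn_rulingAngle (hc : ∀ t ∈ s, ContDiffAt ℝ (m + 3) c t)
    (hα : ∀ t ∈ s, ContDiffAt ℝ (m + 1) α t) (hκ : ∀ t ∈ s, curvature c t ≠ 0)
    (hsin : ∀ t ∈ s, sin (α t) ≠ 0) (hβ : IsRulingAngle c α β s) :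
    ContDiffOn ℝ m β s := by
  have hβeq : ∀ t ∈ s, β t =
      π / 2 - arctan ((deriv α t + torsion c t) / (curvature c t * sin (α t))) := by
    intro t ht
    obtain ⟨hpos, hlt, hcot⟩ := hβ t ht
    exact eq_pi_div_two_sub_arctan_of_cos_mul_eq ⟨hpos, hlt⟩
      (mul_ne_zero (hκ t ht) (hsin t ht)) hcot
  refine ContDiffOn.congr (fun t ht => ContDiffAt.contDiffWithinAt ?_) hβeq
  have hκt := hκ t ht
  have hcurv : ContDiffAt ℝ m (curvature c) t :=
    contDiffAt_curvature ((hc t ht).of_le (add_le_add_right (by norm_num) m)) hκt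
  have hsinα : ContDiffAt ℝ m (fun t => sin (α t)) t := ((hα t ht).of_le le_self_add).sin
  have hnum := ((hα t ht).derivWithin le_rfl).add (contDiffAt_torsion (hc t ht) hκt)
  exact contDiffAt_const.sub (contDiff_arctan.contDiffAt.comp t
    (hnum.div (hcurv.mul hsinα) (mul_ne_zero hκt (hsin t ht))))

theorem contDiffOn_stripRuling (hc : ∀ t ∈ s, ContDiffAt ℝ (m + 3) c t)
    (hα : ∀ t ∈ s, ContDiffAt ℝ (m + 1) α t) (hκ : ∀ t ∈ s, curvature c t ≠ 0)
    (hsin : ∀ t ∈ s, sin (α t) ≠ 0) (hβ : IsRulingAngle c α β s) :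
    ContDiffOn ℝ m (stripRuling c α β) s := by
  have hc₂ : ∀ t ∈ s, ContDiffAt ℝ (m + 2) c t := fun t ht =>
    (hc t ht).of_le (add_le_add_right (by norm_num) m)
  have hα₀ : ContDiffOn ℝ m α s := fun t ht =>
    ((hα t ht).of_le le_self_add).contDiffWithinAt
  have hβ₀ : ContDiffOn ℝ m β s := contDiffOn_rulingAngle hc hα hκ hsin hβ
  have he : ContDiffOn ℝ m (deriv c) s := fun t ht =>
    ((hc₂ t ht).derivWithin (add_le_add_right one_le_two m)).contDiffWithinAt
  have hn : ContDiffOn ℝ m (unitNormal c) s := fun t ht =>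
    (contDiffAt_unitNormal (hc₂ t ht) (hκ t ht)).contDiffWithinAt
  have hb : ContDiffOn ℝ m (binormal c) s := fun t ht =>
    (contDiffAt_binormal (hc₂ t ht) (hκ t ht)).contDiffWithinAt
  exact (hβ₀.cos.smul he).add (hβ₀.sin.smul ((hα₀.cos.smul hn).add (hα₀.sin.smul hb)))

end Smoothness

theorem linearIndependent_reflected_combinations {K M : Type*} [Field K] [NeZero (2 : K)]
    [AddCommGroup M] [Module K M] {u v w : M} (h : LinearIndependent K ![u, v, w])
    {p q p' q' x y : K} (hq : q ≠ 0) (hq' : q' ≠ 0) (hx : x ≠ 0) (hy : y ≠ 0) :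
    LinearIndependent K ![u, p • u + q • (x • v + y • w), p' • u + q' • (x • v - y • w)] := by
  refine Fintype.linearIndependent_iff.mpr fun g hg => ?_
  have hcoeff := Fintype.linearIndependent_iff.mp h
    ![g 0 + g 1 * p + g 2 * p', (g 1 * q + g 2 * q') * x, (g 1 * q - g 2 * q') * y] (by
      rw [← hg]
      simp only [Fin.sum_univ_three, Matrix.cons_val]
      module)
  have hsum : g 1 * q + g 2 * q' = 0 := (mul_eq_zero.mp (hcoeff 1)).resolve_right hx
  have hdiff : g 1 * q - g 2 * q' = 0 := (mul_eq_zero.mp (hcoeff 2)).resolve_right hy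
  have hg₁ : g 1 = 0 := by
    have h₂ : 2 * (g 1 * q) = 0 := by linear_combination hsum + hdiff
    simpa [two_ne_zero, hq] using h₂
  have hg₂ : g 2 = 0 := by simpa [hg₁, hq'] using hsum
  have hg₀ : g 0 = 0 := by simpa [hg₁, hg₂] using hcoeff 0
  exact Fin.forall_fin_succ.mpr ⟨hg₀, Fin.forall_fin_two.mpr ⟨hg₁, hg₂⟩⟩

theorem linearIndependent_derivWithin_stripRuling_stripRuling_neg {β' : ℝ → ℝ}
    (hs : UniqueDiffWithinAt ℝ s t) (ht : t ∈ s) (hc : ContDiffAt ℝ 2 c t)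
    (hunit : ∀ x ∈ s, ‖deriv c x‖ = 1) (hκ : curvature c t ≠ 0) (hsin : sin (α t) ≠ 0)
    (hcos : cos (α t) ≠ 0) (hβ : sin (β t) ≠ 0) (hβ' : sin (β' t) ≠ 0) :
    LinearIndependent ℝ ![derivWithin c s t, stripRuling c α β t, stripRuling c (-α) β' t] := by
  have hframe := orthonormal_deriv_unitNormal_binormal hs ht hc hunit hκ
  rw [(hc.differentiableAt two_ne_zero).derivWithin hs]
  simpa [stripRuling, sub_eq_add_neg] using
    linearIndependent_reflected_combinations (p := cos (β t)) (p' := cos (β' t))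
      hframe.linearIndependent hβ hβ' hcos hsin

end Frame

/-- Corollary 1.3: if the crease `C = c(I)` has no symmetries
(the only isometry of `ℝ³` preserving `C` is the identity), then for `ε > 0`
sufficiently small and any `δ ∈ (0, ε]`, no isometry of `ℝ³` maps `φ_f(Ω_δ)`
into `ψ_f(Ω_ε)`. -/
theorem stmt8 (a b : ℝ) (hab : a < b)
    (c : ℝ → E3) (hc : ContDiff ℝ ∞ c) (hinj : InjOn c (Icc a b))
    (harc : ∀ t ∈ Icc a b, ‖deriv c t‖ = 1)
    (κ : ℝ → ℝ) (hκ : ∀ t, κ t = ‖deriv (deriv c) t‖)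
    (hκpos : ∀ t ∈ Icc a b, 0 < κ t)
    (e n bi : ℝ → E3) (τ : ℝ → ℝ)
    (he : ∀ t, e t = deriv c t)
    (hn : ∀ t, n t = (κ t)⁻¹ • deriv (deriv c) t)
    (hbi : ∀ t, bi t = cross3 (e t) (n t))
    (hτ : ∀ t, τ t = ⟪deriv n t, bi t⟫)
    (α : ℝ → ℝ) (hα : ContDiff ℝ ∞ α)
    (hα1 : ∀ t ∈ Icc a b, 0 < |α t| ∧ |α t| < π / 2)
    (β βc : ℝ → ℝ)
    (hβ : ∀ t ∈ Icc a b, 0 < β t ∧ β t < π ∧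
      cos (β t) * (κ t * sin (α t)) = (deriv α t + τ t) * sin (β t))
    (hβc : ∀ t ∈ Icc a b, 0 < βc t ∧ βc t < π ∧
      cos (βc t) * (κ t * sin (α t)) = (deriv α t - τ t) * sin (βc t))
    (ξ ξc : ℝ → E3)
    (hξ : ∀ t, ξ t = cos (β t) • e t +
      sin (β t) • (cos (α t) • n t + sin (α t) • bi t))
    (hξc : ∀ t, ξc t = cos (βc t) • e t +
      sin (βc t) • (cos (-α t) • n t + sin (-α t) • bi t))
    (f fc : ℝ → ℝ → E3)
    (hf : ∀ t v, f t v = c t + v • ξ t)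
    (hfc : ∀ t v, fc t v = c t + v • ξc t)
    (φ ψ : ℝ × ℝ → E3)
    (hφ : ∀ t v, φ (t, v) = if 0 ≤ v then f t v else fc t v)
    (hψ : ∀ t v, ψ (t, v) = if 0 ≤ v then fc t v else f t v)
    -- `C` has no symmetries:
    (hsym : ∀ T : E3 ≃ᵢ E3, T '' (c '' Icc a b) = c '' Icc a b → ∀ x, T x = x) :
    ∃ ε₀ > (0 : ℝ), ∀ ε : ℝ, 0 < ε → ε ≤ ε₀ → ∀ δ : ℝ, 0 < δ → δ ≤ ε →
      ¬ ∃ T : E3 ≃ᵢ E3,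
        T '' (φ '' (Icc a b ×ˢ Ioo (-δ) δ)) ⊆ ψ '' (Icc a b ×ˢ Ioo (-ε) ε) := by
  obtain rfl : e = deriv c := funext he
  obtain rfl : κ = curvature c := funext hκ
  obtain rfl : n = unitNormal c := funext hn
  obtain rfl : bi = binormal c := funext hbi
  obtain rfl : τ = torsion c := funext hτ
  obtain rfl : ξ = stripRuling c α β := funext hξ
  obtain rfl : ξc = stripRuling c (-α) βc := funext hξc
  obtain rfl : φ = ruledFold c (stripRuling c α β) (stripRuling c (-α) βc) :=
    funext fun p => by simp only [hφ, hf, hfc, ruledFold]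
  obtain rfl : ψ = ruledFold c (stripRuling c (-α) βc) (stripRuling c α β) :=
    funext fun p => by simp only [hψ, hf, hfc, ruledFold]
  have hβ : IsRulingAngle c α β (Icc a b) := hβ
  have hβc : IsRulingAngle c (-α) βc (Icc a b) := isRulingAngle_neg_iff.mpr hβc
  have hα₂ : ContDiff ℝ (1 + 1) α := contDiff_infty.mp hα 2
  have hκ₀ : ∀ t ∈ Icc a b, curvature c t ≠ 0 := fun t ht => (hκpos t ht).ne'
  have hsin : ∀ t ∈ Icc a b, sin (α t) ≠ 0 := fun t ht => sin_ne_zero_of_abs_mem_Ioo (hα1 t ht)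
  have hc₄ : ∀ t ∈ Icc a b, ContDiffAt ℝ (1 + 3) c t := fun t _ =>
    (contDiff_infty.mp hc (1 + 3)).contDiffAt
  have hstrip := contDiffOn_stripRuling hc₄ (fun t _ => hα₂.contDiffAt) hκ₀ hsin hβ
  have hdual := contDiffOn_stripRuling hc₄ (fun t _ => hα₂.neg.contDiffAt) hκ₀
    (by simpa using hsin) hβc
  obtain ⟨ε₀, hε₀, hT⟩ := stmt8_general hab (contDiff_infty.mp hc 1).contDiffOn hinj hstrip hdual
    (fun t ht => linearIndependent_derivWithin_stripRuling_stripRuling_neg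
      (uniqueDiffOn_Icc hab t ht) ht (contDiff_infty.mp hc 2).contDiffAt harc (hκ₀ t ht)
      (hsin t ht) (cos_pos_of_mem_Ioo (abs_lt.mp (hα1 t ht).2)).ne' (hβ.sin_ne_zero ht)
      (hβc.sin_ne_zero ht)) hsym
  exact ⟨ε₀, hε₀, fun ε _ hεε₀ δ hδ _ ⟨T, hsub⟩ => hT δ hδ T (hsub.trans
    (image_mono (prod_mono_right (Ioo_subset_Ioo (neg_le_neg hεε₀) hεε₀))))⟩
end
end

section
/- The space curve C₀ := c₀([1/10, 9/10]) has no symmetries: if T is an isometry of ℝ³ with T(C₀) = C₀, then T is the identity map of ℝ³. -/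
noncomputable section
open Real Set
open scoped ContDiff

local notation "⟪" x ", " y "⟫" => @inner ℝ _ _ x y

/-- The space curve `c₀(t) = (arctan t, log(1+t²)/√2, t - arctan t)`. -/
def c₀ : ℝ → E3 := fun t =>
  (WithLp.equiv 2 (Fin 3 → ℝ)).symm
    ![arctan t, log (1 + t ^ 2) / Real.sqrt 2, t - arctan t]

/-
The curve `c₀` has unit speed, so an isometry preserving an arc of it acts on the parameter either
as the identity or as the reflection of the parameter interval. In the first case it fixes the arc,
whose affine span is the whole space. The second case would make the curvature
`√2 / (1 + t ^ 2)` of `c₀` symmetric about the midpoint of the interval, which forces the midpoint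
to be `0`. Curvature enters only through its integrated form, the angles between velocities.
-/

section UnitSpeedCurve

open scoped Topology

lemma eqOn_id_or_eqOn_reflection_of_lipschitzOnWith_one {φ : ℝ → ℝ} {a b : ℝ} (hab : a ≤ b)
    (hφ : LipschitzOnWith 1 φ (Icc a b)) (hsurj : SurjOn φ (Icc a b) (Icc a b)) :
    EqOn φ id (Icc a b) ∨ EqOn φ (fun t => a + b - t) (Icc a b) := by
  have hdist : ∀ s ∈ Icc a b, ∀ t ∈ Icc a b, |φ s - φ t| ≤ |s - t| := fun s hs t ht => by
    simpa [Real.dist_eq] using hφ.dist_le_mul s hs t ht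
  obtain ⟨p, hp, hpa⟩ := hsurj (left_mem_Icc.2 hab)
  obtain ⟨q, hq, hqb⟩ := hsurj (right_mem_Icc.2 hab)
  have hba : b - a ≤ |q - p| := by
    simpa [hpa, hqb] using (le_abs_self _).trans (hdist q hq p hp)
  have hbounds : ∀ t ∈ Icc a b, φ t - a ≤ |t - p| ∧ b - φ t ≤ |q - t| := fun t ht =>
    ⟨hpa ▸ (le_abs_self _).trans (hdist t ht p hp), hqb ▸ (le_abs_self _).trans (hdist q hq t ht)⟩
  rcases le_total p q with hpq | hqp
  · left
    rw [abs_of_nonneg (sub_nonneg.2 hpq)] at hba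
    obtain rfl : p = a := by linarith [hp.1, hq.2]
    obtain rfl : q = b := by linarith [hq.2]
    intro t ht
    obtain ⟨hle, hge⟩ := hbounds t ht
    rw [abs_of_nonneg (sub_nonneg.2 ht.1)] at hle
    rw [abs_of_nonneg (sub_nonneg.2 ht.2)] at hge
    exact le_antisymm ((sub_le_sub_iff_right _).1 hle) ((sub_le_sub_iff_left _).1 hge)
  · right
    rw [abs_of_nonpos (sub_nonpos.2 hqp)] at hba
    obtain rfl : q = a := by linarith [hq.1, hp.2]
    obtain rfl : p = b := by linarith [hp.2]
    intro t ht
    obtain ⟨hle, hge⟩ := hbounds t ht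
    rw [abs_of_nonpos (sub_nonpos.2 ht.2)] at hle
    rw [abs_of_nonpos (sub_nonpos.2 ht.1)] at hge
    exact le_antisymm (by linarith) (by linarith)

section NormedSpace

variable {E : Type*} [NormedAddCommGroup E] [NormedSpace ℝ E] {c v : ℝ → E} {s : Set ℝ}

lemma hasDerivWithinAt_affineIsometryEquiv_comp {F : Type*} [NormedAddCommGroup F]
    [NormedSpace ℝ F] (A : E ≃ᵃⁱ[ℝ] F) {w : E} {t : ℝ}
    (hc : HasDerivWithinAt c w s t) :
    HasDerivWithinAt (A ∘ c) (A.linearIsometryEquiv w) s t := by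
  have hA : ⇑A = fun x => A.linearIsometryEquiv x + A 0 := by
    funext x
    simpa using A.map_vadd 0 x
  rw [hA]
  exact (A.linearIsometryEquiv.toContinuousLinearEquiv.hasFDerivAt.comp_hasDerivWithinAt t
    hc).add_const _

lemma linearIsometryEquiv_apply_velocity {A : E ≃ᵃⁱ[ℝ] E} {φ : ℝ → ℝ} {φ' t : ℝ}
    (hs : UniqueDiffOn ℝ s) (hc : ∀ t ∈ s, HasDerivWithinAt c (v t) s t)
    (hφs : MapsTo φ s s) (hAc : EqOn (A ∘ c) (c ∘ φ) s) (ht : t ∈ s)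
    (hφ : HasDerivWithinAt φ φ' s t) :
    A.linearIsometryEquiv (v t) = φ' • v (φ t) :=
  (hs t ht).eq_deriv s
    (hasDerivWithinAt_affineIsometryEquiv_comp A (hc t ht))
    (((hc (φ t) (hφs ht)).scomp t hφ hφs).congr hAc (hAc ht))

lemma eqOn_comp_self_or_eqOn_comp_reflection_of_image_eq {A : E ≃ᵃⁱ[ℝ] E} {g : E → ℝ} {a b : ℝ}
    (hab : a < b) (hc : ∀ t ∈ Icc a b, HasDerivWithinAt c (v t) (Icc a b) t)
    (hv : ∀ t ∈ Icc a b, ‖v t‖ = 1) (hg : Differentiable ℝ g) (hgc : LeftInvOn g c (Icc a b))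
    (hA : A '' (c '' Icc a b) = c '' Icc a b) :
    EqOn (A ∘ c) c (Icc a b) ∨ EqOn (A ∘ c) (fun t => c (a + b - t)) (Icc a b) := by
  set φ : ℝ → ℝ := g ∘ A ∘ c with hφ
  have himage : φ '' Icc a b = Icc a b := by
    rw [hφ, image_comp, image_comp, hA, hgc.image_image]
  have hAc : EqOn (A ∘ c) (c ∘ φ) (Icc a b) := fun t ht =>
    (hgc.rightInvOn_image (hA ▸ mem_image_of_mem A (mem_image_of_mem c ht))).symm
  have hderiv : ∀ t ∈ Icc a b, ∃ φ', HasDerivWithinAt φ φ' (Icc a b) t := fun t ht =>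
    ⟨_, (hg _).hasFDerivAt.comp_hasDerivWithinAt t
      (hasDerivWithinAt_affineIsometryEquiv_comp A (hc t ht))⟩
  choose! φ' hφ' using hderiv
  have hspeed : ∀ t ∈ Icc a b, ‖φ' t‖ = 1 := fun t ht => by
    have h := congrArg norm <| linearIsometryEquiv_apply_velocity (uniqueDiffOn_Icc hab) hc
      (mapsTo_iff_image_subset.2 himage.subset) hAc ht (hφ' t ht)
    rwa [LinearIsometryEquiv.norm_map, norm_smul, hv t ht,
      hv _ (himage.subset (mem_image_of_mem φ ht)), mul_one, eq_comm] at h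
  have hlip : LipschitzOnWith 1 φ (Icc a b) :=
    (convex_Icc a b).lipschitzOnWith_of_nnnorm_hasDerivWithin_le hφ' fun t ht =>
      (hspeed t ht).le
  exact (eqOn_id_or_eqOn_reflection_of_lipschitzOnWith_one hab.le hlip himage.superset).imp
    (fun h => hAc.trans h.comp_left) (fun h => hAc.trans h.comp_left)

lemma velocity_mem_vectorSpan [FiniteDimensional ℝ E] {w : E} {t : ℝ}
    (hs : UniqueDiffWithinAt ℝ s t) (ht : t ∈ s) (hc : HasDerivWithinAt c w s t) :
    w ∈ vectorSpan ℝ (c '' s) := by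
  have : (𝓝[s \ {t}] t).NeBot := by
    rw [← accPt_principal_iff_nhdsWithin, ← uniqueDiffWithinAt_iff_accPt]
    exact hs
  refine (vectorSpan ℝ (c '' s)).closed_of_finiteDimensional.mem_of_tendsto
    (hasDerivWithinAt_iff_tendsto_slope.1 hc) ?_
  filter_upwards [self_mem_nhdsWithin] with u hu
  exact Submodule.smul_mem _ _
    (vsub_mem_vectorSpan ℝ (mem_image_of_mem c hu.1) (mem_image_of_mem c ht))

end NormedSpace

lemma inner_velocity_reflection_eq {E : Type*} [NormedAddCommGroup E] [InnerProductSpace ℝ E]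
    {A : E ≃ᵃⁱ[ℝ] E} {c v : ℝ → E} {a b s t : ℝ} (hab : a < b)
    (hc : ∀ t ∈ Icc a b, HasDerivWithinAt c (v t) (Icc a b) t)
    (hAc : EqOn (A ∘ c) (fun t => c (a + b - t)) (Icc a b))
    (hs : s ∈ Icc a b) (ht : t ∈ Icc a b) :
    ⟪v (a + b - s), v (a + b - t)⟫ = ⟪v s, v t⟫ := by
  have hmaps : MapsTo (fun t => a + b - t) (Icc a b) (Icc a b) := fun u hu =>
    ⟨by linarith [hu.2], by linarith [hu.1]⟩
  have hvel : ∀ u ∈ Icc a b, A.linearIsometryEquiv (v u) = -v (a + b - u) := fun u hu => by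
    simpa using linearIsometryEquiv_apply_velocity (uniqueDiffOn_Icc hab) hc hmaps hAc hu
      ((hasDerivWithinAt_id u _).const_sub (a + b))
  rw [← inner_neg_neg, ← hvel s hs, ← hvel t ht, LinearIsometryEquiv.inner_map_map]

end UnitSpeedCurve

section VelocityOfCurve

/-- The velocity of the curve `c₀`. -/
def c₀Velocity (t : ℝ) : E3 :=
  !₂[1 / (1 + t ^ 2), √2 * t / (1 + t ^ 2), t ^ 2 / (1 + t ^ 2)]

lemma hasDerivAt_c₀ (t : ℝ) : HasDerivAt c₀ (c₀Velocity t) t := by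
  have hpos : (1 + t ^ 2 : ℝ) ≠ 0 := by positivity
  have hlog : HasDerivAt (fun t : ℝ => log (1 + t ^ 2) / √2) (√2 * t / (1 + t ^ 2)) t := by
    refine ((((hasDerivAt_pow 2 t).const_add 1).log hpos).div_const √2).congr_deriv ?_
    field_simp
    simp [mul_comm]
  have hsub : HasDerivAt (fun t : ℝ => t - arctan t) (t ^ 2 / (1 + t ^ 2)) t := by
    refine ((hasDerivAt_id t).sub (hasDerivAt_arctan t)).congr_deriv ?_
    field_simp
    ring
  have hpi : HasDerivAt (fun t : ℝ => ![arctan t, log (1 + t ^ 2) / √2, t - arctan t])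
      ![1 / (1 + t ^ 2), √2 * t / (1 + t ^ 2), t ^ 2 / (1 + t ^ 2)] t := by
    refine hasDerivAt_pi.2 fun i => ?_
    fin_cases i
    exacts [hasDerivAt_arctan t, hlog, hsub]
  exact (PiLp.hasFDerivAt_toLp (𝕜 := ℝ) 2 _).comp_hasDerivAt t hpi

lemma c₀_zero_add_c₀_two (t : ℝ) : c₀ t 0 + c₀ t 2 = t := by
  simp [c₀]

lemma inner_c₀Velocity_left (t : ℝ) (y : E3) :
    ⟪c₀Velocity t, y⟫ = (y 0 + √2 * y 1 * t + y 2 * t ^ 2) / (1 + t ^ 2) := by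
  simp only [c₀Velocity, PiLp.inner_apply, Fin.sum_univ_three, RCLike.inner_apply, conj_trivial,
    Matrix.cons_val]
  ring

lemma inner_c₀Velocity_c₀Velocity (s t : ℝ) :
    ⟪c₀Velocity s, c₀Velocity t⟫ = 1 - (s - t) ^ 2 / ((1 + s ^ 2) * (1 + t ^ 2)) := by
  rw [inner_c₀Velocity_left]
  simp only [c₀Velocity, Matrix.cons_val]
  field_simp
  rw [Real.sq_sqrt zero_le_two]
  ring

lemma norm_c₀Velocity (t : ℝ) : ‖c₀Velocity t‖ = 1 := by
  have h : ‖c₀Velocity t‖ ^ 2 = 1 := by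
    rw [← real_inner_self_eq_norm_sq, inner_c₀Velocity_c₀Velocity]
    simp
  exact (pow_eq_one_iff_of_nonneg (norm_nonneg _) two_ne_zero).1 h

lemma add_eq_zero_of_inner_c₀Velocity_midpoint_eq {a b : ℝ} (hab : a ≠ b)
    (h : ⟪c₀Velocity a, c₀Velocity ((a + b) / 2)⟫ = ⟪c₀Velocity b, c₀Velocity ((a + b) / 2)⟫) :
    a + b = 0 := by
  rw [inner_c₀Velocity_c₀Velocity, inner_c₀Velocity_c₀Velocity, sub_right_inj,
    div_eq_div_iff (by positivity) (by positivity)] at h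
  have hprod : (1 + ((a + b) / 2) ^ 2) * (b - a) ^ 3 * (a + b) = 0 := by
    linear_combination 4 * h
  exact (mul_eq_zero.1 hprod).resolve_left
    (mul_ne_zero (by positivity) (pow_ne_zero 3 (sub_ne_zero.2 hab.symm)))

lemma eq_zero_of_inner_c₀Velocity_eq_zero {s : Set ℝ} (hs : s.Infinite) {y : E3}
    (hy : ∀ t ∈ s, ⟪c₀Velocity t, y⟫ = 0) : y = 0 := by
  let p : Polynomial ℝ := .C (y 0) + .C (√2 * y 1) * .X + .C (y 2) * .X ^ 2
  have hp : p = 0 := p.eq_zero_of_infinite_isRoot <| hs.mono fun t ht => by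
    have h := hy t ht
    rw [inner_c₀Velocity_left, div_eq_zero_iff, or_iff_left (by positivity)] at h
    simpa [p] using h
  have hcoeff (n : ℕ) : p.coeff n = 0 := by simp [hp]
  ext i
  fin_cases i
  · simpa [p] using hcoeff 0
  · simpa [p] using hcoeff 1
  · simpa [p, Polynomial.coeff_X] using hcoeff 2

lemma span_image_c₀Velocity {s : Set ℝ} (hs : s.Infinite) :
    Submodule.span ℝ (c₀Velocity '' s) = ⊤ :=
  Submodule.orthogonal_eq_bot_iff.1 <| (Submodule.eq_bot_iff _).2 fun _ hy =>
    eq_zero_of_inner_c₀Velocity_eq_zero hs fun _ ht =>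
      hy _ (Submodule.subset_span (mem_image_of_mem _ ht))

lemma affineSpan_image_c₀_Icc {a b : ℝ} (hab : a < b) : affineSpan ℝ (c₀ '' Icc a b) = ⊤ := by
  rw [AffineSubspace.affineSpan_eq_top_iff_vectorSpan_eq_top_of_nonempty ℝ E3 E3
    ((nonempty_Icc.2 hab.le).image c₀), ← top_le_iff, ← span_image_c₀Velocity (Icc_infinite hab)]
  exact Submodule.span_le.2 <| image_subset_iff.2 fun t ht =>
    velocity_mem_vectorSpan (uniqueDiffOn_Icc hab t ht) ht (hasDerivAt_c₀ t).hasDerivWithinAt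

end VelocityOfCurve

theorem stmt12_general {a b : ℝ} (hab : a < b) (hab₀ : a + b ≠ 0) (T : E3 ≃ᵢ E3)
    (hT : T '' (c₀ '' Icc a b) = c₀ '' Icc a b) (x : E3) : T x = x := by
  have hc : ∀ t ∈ Icc a b, HasDerivWithinAt c₀ (c₀Velocity t) (Icc a b) t := fun t _ =>
    (hasDerivAt_c₀ t).hasDerivWithinAt
  have hheight : Differentiable ℝ fun y : E3 => y 0 + y 2 := by fun_prop
  rcases eqOn_comp_self_or_eqOn_comp_reflection_of_image_eq (A := T.toRealAffineIsometryEquiv)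
      hab hc (fun t _ => norm_c₀Velocity t) hheight (fun t _ => c₀_zero_add_c₀_two t) hT
    with hid | hreflection
  · have hT_refl : T.toRealAffineIsometryEquiv.toAffineEquiv = AffineEquiv.refl ℝ E3 :=
      AffineEquiv.ext_on (affineSpan_image_c₀_Icc hab) _ _ (forall_mem_image.2 hid)
    exact DFunLike.congr_fun hT_refl x
  · have hmid : (a + b) / 2 ∈ Icc a b := ⟨by linarith, by linarith⟩
    have hinner := inner_velocity_reflection_eq hab hc hreflection (left_mem_Icc.2 hab.le) hmid
    rw [add_sub_cancel_left, sub_half] at hinner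
    exact absurd (add_eq_zero_of_inner_c₀Velocity_midpoint_eq hab.ne hinner.symm) hab₀

/-- the curve `C₀ = c₀([1/10, 9/10])` has no symmetries: any
isometry of `ℝ³` (distance-preserving bijection) with `T(C₀) = C₀` is the
identity. -/
theorem stmt12 :
    ∀ T : E3 ≃ᵢ E3,
      T '' (c₀ '' Icc (1 / 10 : ℝ) (9 / 10)) = c₀ '' Icc (1 / 10 : ℝ) (9 / 10) →
      ∀ x : E3, T x = x :=
  stmt12_general (by norm_num) (by norm_num)
end
end
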